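/- arXiv:2004.10521 — 5 statements merged into one kernel-verified Lean document; each statement's English description precedes it below -/
import Mathlib

section
/- Assume (L,N) is graphically admissible and let O_min := ∂_{H^1}(cc(nb_{H^1}(Y), A, H^1)). Then O_min is a minimal set satisfying the graphical adjustment criterion for A,Y,L,N in G, and for every minimal set Z satisfying the criterion: Y and Z\O_min are d-separated by {A} ∪ O_min in G, and A and O_min\Z are d-separated by Z in G. -/
open Relation Set

namespace CausalGraph

variable {V : Type*} [Fintype V] [DecidableEq V]

/-- `p` is a path in the undirected sense from `u` to `v` along adjacency `Adj`:
a nonempty list of pairwise distinct vertices, consecutive ones adjacent,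
starting at `u` and ending at `v`. -/
def IsPath (Adj : V → V → Prop) (u v : V) (p : List V) : Prop :=
  List.Chain' Adj p ∧ p.head? = some u ∧ p.getLast? = some v ∧ p.Nodup

/-- Ancestors of `S` in the digraph `D` (every vertex is an ancestor of itself). -/
def anc (D : V → V → Prop) (S : Set V) : Set V :=
  {u | ∃ v ∈ S, Relation.ReflTransGen D u v}

/-- Descendants of `S` in the digraph `D` (every vertex is a descendant of itself). -/
def desc (D : V → V → Prop) (S : Set V) : Set V :=
  {u | ∃ v ∈ S, Relation.ReflTransGen D v u}

/-- Parents of vertices of `S` in the digraph `D`. -/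
def parents (D : V → V → Prop) (S : Set V) : Set V :=
  {u | ∃ v ∈ S, D u v}

/-- The digraph `D` is acyclic. -/
def Acyclic (D : V → V → Prop) : Prop :=
  ∀ u v, D u v → ¬ Relation.ReflTransGen D v u

/-- Vertices other than `A` lying on a directed path from `A` to `Y`. -/
def cn (D : V → V → Prop) (A Y : V) : Set V :=
  {v | v ≠ A ∧ Relation.ReflTransGen D A v ∧ Relation.ReflTransGen D v Y}

/-- The forbidden set. -/
def forb (D : V → V → Prop) (A Y : V) : Set V :=
  desc D (cn D A Y) ∪ {A}

/-- Proper back-door graph: delete every edge from `A` into `cn D A Y`. -/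
def pbd (D : V → V → Prop) (A Y : V) : V → V → Prop :=
  fun u v => D u v ∧ ¬(u = A ∧ v ∈ cn D A Y)

/-- `y` is an interior vertex of the list `p` with neighbours `x` and `z` on the path. -/
def InteriorAt (p : List V) (x y z : V) : Prop :=
  ∃ s t : List V, p = s ++ x :: y :: z :: t

/-- The path `p` is blocked by `Z` in the digraph `D`: some interior non-collider
lies in `Z`, or some interior collider has no descendant in `Z`. -/
def Blocked (D : V → V → Prop) (Z : Set V) (p : List V) : Prop :=
  (∃ x y z, InteriorAt p x y z ∧ ¬(D x y ∧ D z y) ∧ y ∈ Z) ∨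
  (∃ x y z, InteriorAt p x y z ∧ (D x y ∧ D z y) ∧ ∀ d ∈ desc D {y}, d ∉ Z)

/-- d-separation of `S` and `T` given `Z` in the digraph `D`. -/
def DSep (D : V → V → Prop) (S T Z : Set V) : Prop :=
  ∀ s ∈ S, ∀ t ∈ T, ∀ p : List V,
    IsPath (fun a b => D a b ∨ D b a) s t p → Blocked D Z p

/-- Moral graph of the subgraph of the digraph `D` induced on `Vs`. -/
def moral (D : V → V → Prop) (Vs : Set V) : SimpleGraph V :=
  SimpleGraph.fromRel (fun u v =>
    u ∈ Vs ∧ v ∈ Vs ∧ (D u v ∨ D v u ∨ ∃ w ∈ Vs, D u w ∧ D v w))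

/-- Separation in an undirected graph: every path from `S` to `T` meets `W`. -/
def USep (H : SimpleGraph V) (S T W : Set V) : Prop :=
  ∀ s ∈ S, ∀ t ∈ T, ∀ p : List V, IsPath H.Adj s t p → ∃ z ∈ W, z ∈ p

/-- `Z` is an `A`–`Y` cut in an undirected graph `H` with vertex set `Vs`. -/
def IsCut (Vs : Set V) (H : SimpleGraph V) (A Y : V) (Z : Set V) : Prop :=
  Z ⊆ Vs ∧ Z ∩ {A, Y} = ∅ ∧ ∀ p : List V, IsPath H.Adj A Y p → ∃ z ∈ Z, z ∈ p

def MinimalCut (Vs : Set V) (H : SimpleGraph V) (A Y : V) (Z : Set V) : Prop :=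
  IsCut Vs H A Y Z ∧ ∀ Z' ⊂ Z, ¬ IsCut Vs H A Y Z'

def MinimumCut (Vs : Set V) (H : SimpleGraph V) (A Y : V) (Z : Set V) : Prop :=
  IsCut Vs H A Y Z ∧ ∀ Z', IsCut Vs H A Y Z' → Z.ncard ≤ Z'.ncard

/-- Connected component of `y` in `H` restricted to the complement of `U`:
vertices reachable from `y` by paths avoiding `U`. -/
def cc (H : SimpleGraph V) (U : Set V) (y : V) : Set V :=
  {w | ∃ p : List V, IsPath H.Adj y w p ∧ ∀ x ∈ p, x ∉ U}

/-- Boundary of `S` in `H`: vertices outside `S` adjacent to some vertex of `S`. -/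
def bdry (H : SimpleGraph V) (S : Set V) : Set V :=
  {v | v ∉ S ∧ ∃ u ∈ S, H.Adj v u}

/-- The partial order `Z₁ ⊴_H Z₂` between `A`–`Y` cuts. -/
def TLE (H : SimpleGraph V) (A Y : V) (Z₁ Z₂ : Set V) : Prop :=
  USep H {Y} (Z₂ \ Z₁) Z₁ ∧ USep H {A} (Z₁ \ Z₂) Z₂

/-- Ancestors of `{A, Y} ∪ L`. -/
def ancAYL (D : V → V → Prop) (A Y : V) (L : Set V) : Set V :=
  anc D ({A, Y} ∪ L)

/-- The moral graph `H⁰` of the proper back-door graph induced on `an_G({A,Y} ∪ L)`. -/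
def H0 (D : V → V → Prop) (A Y : V) (L : Set V) : SimpleGraph V :=
  moral (pbd D A Y) (ancAYL D A Y L)

/-- The set of vertices removed from `H⁰` when constructing `H¹`. -/
def Ignore (D : V → V → Prop) (A Y : V) (L N : Set V) : Set V :=
  (ancAYL D A Y L \ {A, Y}) ∩ ((Set.univ \ N) ∪ forb D A Y)

/-- Vertex set of `H¹`. -/
def H1verts (D : V → V → Prop) (A Y : V) (L N : Set V) : Set V :=
  ancAYL D A Y L \ Ignore D A Y L N

/-- The non-parametric adjustment efficiency graph `H¹`: delete the vertices of
`Ignore`, join two remaining vertices if they are joined in `H⁰` by a path all of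
whose intermediate vertices are in `Ignore`, and join `A` and `Y` to every vertex
of `L`. -/
def H1 (D : V → V → Prop) (A Y : V) (L N : Set V) : SimpleGraph V :=
  SimpleGraph.fromRel (fun u v =>
    u ∈ H1verts D A Y L N ∧ v ∈ H1verts D A Y L N ∧
      ((∃ p : List V, IsPath (H0 D A Y L).Adj u v p ∧
          ∀ x ∈ p, x ≠ u → x ≠ v → x ∈ Ignore D A Y L N) ∨
        (u = A ∧ v ∈ L) ∨ (u = Y ∧ v ∈ L)))

/-- The graphical adjustment criterion for `A, Y, L, N` in the DAG `D`. -/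
def GAC (D : V → V → Prop) (A Y : V) (L N Z : Set V) : Prop :=
  DSep (pbd D A Y) {A} {Y} Z ∧ Z ∩ forb D A Y = ∅ ∧ L ⊆ Z ∧ Z ⊆ N

def MinimalGAC (D : V → V → Prop) (A Y : V) (L N Z : Set V) : Prop :=
  GAC D A Y L N Z ∧ ∀ Z' ⊂ Z, ¬ GAC D A Y L N Z'

def MinimumGAC (D : V → V → Prop) (A Y : V) (L N Z : Set V) : Prop :=
  GAC D A Y L N Z ∧ ∀ Z', GAC D A Y L N Z' → Z.ncard ≤ Z'.ncard

/-- Graphical admissibility of the pair `(L, N)`. -/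
def Admissible (D : V → V → Prop) (A Y : V) (L N : Set V) : Prop :=
  ∃ Z, GAC D A Y L N Z

end CausalGraph

set_option linter.unusedSectionVars false

namespace CausalGraph

section Helpers
variable {V : Type*} [Fintype V] [DecidableEq V]

/-- reachability avoiding `U` -/
def Con (R : V → V → Prop) (U : Set V) (a b : V) : Prop :=
  a ∉ U ∧ Relation.ReflTransGen (fun x y => R x y ∧ y ∉ U) a b

theorem Con.not_mem_right {R : V → V → Prop} {U : Set V} {a b : V} (h : Con R U a b) : b ∉ U := by
  obtain ⟨h0, h⟩ := h
  induction h with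
  | refl => exact h0
  | tail _ h _ => exact h.2

theorem Con.tail {R : V → V → Prop} {U : Set V} {a b c : V} (h : Con R U a b) (hbc : R b c)
    (hc : c ∉ U) : Con R U a c := ⟨h.1, h.2.tail ⟨hbc, hc⟩⟩

theorem Con.trans {R : V → V → Prop} {U : Set V} {a b c : V} (h : Con R U a b) (h' : Con R U b c) :
    Con R U a c := ⟨h.1, h.2.trans h'.2⟩

theorem Con.symm {R : V → V → Prop} (hR : ∀ x y, R x y → R y x) {U : Set V} {a b : V}
    (h : Con R U a b) : Con R U b a := by
  obtain ⟨h0, h⟩ := h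
  induction h with
  | refl => exact ⟨h0, .refl⟩
  | tail h1 h ih =>
    have hb : Con R U a _ := ⟨h0, h1⟩
    exact Con.trans ⟨h.2, .single ⟨hR _ _ h.1, hb.not_mem_right⟩⟩ ih

theorem Con.ind {R : V → V → Prop} {U : Set V} {a b : V} (h : Con R U a b) {P : V → Prop}
    (h0 : P a) (hs : ∀ x y, Con R U a x → P x → R x y → y ∉ U → P y) : P b := by
  obtain ⟨ha, h⟩ := h
  induction h with
  | refl => exact h0
  | tail h1 h ih => exact hs _ _ ⟨ha, h1⟩ ih h.1 h.2

theorem path_iff (R : V → V → Prop) (U : Set V) (a b : V) :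
    (∃ p : List V, IsPath R a b p ∧ ∀ x ∈ p, x ∉ U) ↔ Con R U a b := by
  constructor
  · rintro ⟨p, ⟨hc, hh, hl, -⟩, hU⟩
    induction p generalizing a with
    | nil => simp at hh
    | cons c t ih =>
      simp at hh; subst hh
      refine ⟨hU _ (by simp), ?_⟩
      cases t with
      | nil => simp at hl; subst hl; exact .refl
      | cons d t =>
        have hc' : R c d ∧ List.IsChain R (d :: t) := by
          exact List.isChain_cons_cons.1 hc
        have := ih d (fun x hx => hU x (List.mem_cons_of_mem _ hx)) hc'.2 (by simp) (by simpa using hl)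
        exact .head ⟨hc'.1, this.1⟩ this.2
  · rintro ⟨ha, h⟩
    induction h using Relation.ReflTransGen.head_induction_on with
    | refl => exact ⟨[b], ⟨by simp [List.Chain'], by simp, by simp, by simp⟩, by simpa using ha⟩
    | head hac hcb ih =>
      rename_i a c
      obtain ⟨l, ⟨h1, h2, h3, h4⟩, h5⟩ := ih hac.2
      by_cases hal : a ∈ l
      · obtain ⟨s, t, rfl⟩ := List.append_of_mem hal
        refine ⟨a :: t, ⟨?_, by simp, ?_, ?_⟩, ?_⟩
        · exact (List.isChain_append.1 h1).2.1
        · simpa using h3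
        · exact (List.nodup_append.1 h4).2.1
        · intro x hx; exact h5 x (by simp at hx ⊢; tauto)
      · cases l with
        | nil => simp at h2
        | cons d t =>
          simp at h2; subst h2
          refine ⟨a :: d :: t, ⟨?_, by simp, by simpa using h3, ?_⟩, ?_⟩
          · exact List.isChain_cons_cons.2 ⟨hac.1, h1⟩
          · exact List.nodup_cons.2 ⟨hal, h4⟩
          · intro x hx
            rcases List.mem_cons.1 hx with rfl | hx
            · exact ha
            · exact h5 x hx

/-- unblocked triple -/
def Ok (D : V → V → Prop) (Z : Set V) (x y z : V) : Prop :=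
  ((D x y ∧ D z y) ∧ y ∈ anc D Z) ∨ (¬ (D x y ∧ D z y) ∧ y ∉ Z)

def Act (D : V → V → Prop) (Z : Set V) (l : List V) : Prop :=
  List.IsChain (fun a b => D a b ∨ D b a) l ∧ ∀ x y z, InteriorAt l x y z → Ok D Z x y z

theorem not_blocked_iff (D : V → V → Prop) (Z : Set V) (l : List V) :
    ¬ Blocked D Z l ↔ ∀ x y z, InteriorAt l x y z → Ok D Z x y z := by
  constructor
  · intro h x y z hi
    by_cases hc : D x y ∧ D z y
    · left
      refine ⟨hc, ?_⟩
      by_contra hn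
      refine h (Or.inr ⟨x, y, z, hi, hc, ?_⟩)
      rintro d ⟨v, hv, hvd⟩ hd
      rw [Set.mem_singleton_iff] at hv; subst hv
      exact hn ⟨d, hd, hvd⟩
    · right
      refine ⟨hc, fun hy => h (Or.inl ⟨x, y, z, hi, hc, hy⟩)⟩
  · rintro h (⟨x, y, z, hi, hc, hy⟩ | ⟨x, y, z, hi, hc, hy⟩)
    · rcases h x y z hi with h | h
      · exact hc h.1
      · exact h.2 hy
    · rcases h x y z hi with h | h
      · obtain ⟨d, hd, hyd⟩ := h.2
        exact hy d ⟨y, rfl, hyd⟩ hd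
      · exact h.1 hc

theorem act_cons3 (D : V → V → Prop) (Z : Set V) (a b c : V) (t : List V) :
    Act D Z (a :: b :: c :: t) ↔ (D a b ∨ D b a) ∧ Ok D Z a b c ∧ Act D Z (b :: c :: t) := by
  constructor
  · rintro ⟨h1, h2⟩
    rw [List.isChain_cons_cons] at h1
    refine ⟨h1.1, h2 _ _ _ ⟨[], t, rfl⟩, h1.2, ?_⟩
    rintro x y z ⟨s, t', h⟩
    exact h2 _ _ _ ⟨a :: s, t', by rw [h]; rfl⟩
  · rintro ⟨h1, h2, h3, h4⟩
    refine ⟨List.isChain_cons_cons.2 ⟨h1, h3⟩, ?_⟩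
    rintro x y z ⟨s, t', h⟩
    cases s with
    | nil => 
      simp at h
      obtain ⟨rfl, rfl, rfl, rfl⟩ := h
      exact h2
    | cons e s =>
      simp at h
      exact h4 _ _ _ ⟨s, t', h.2⟩

theorem act_two (D : V → V → Prop) (Z : Set V) (a b : V) :
    Act D Z [a, b] ↔ (D a b ∨ D b a) := by
  constructor
  · rintro ⟨h, -⟩; simpa using h
  · intro h
    refine ⟨by simpa using h, ?_⟩
    rintro x y z ⟨s, t, h⟩
    have := congrArg List.length h
    simp at this; omega

theorem act_one (D : V → V → Prop) (Z : Set V) (a : V) : Act D Z [a] := by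
  refine ⟨by simp, ?_⟩
  rintro x y z ⟨s, t, h⟩
  have := congrArg List.length h
  simp at this; omega

theorem act_suffix {D : V → V → Prop} {Z : Set V} {s t : List V} (h : Act D Z (s ++ t)) :
    Act D Z t := by
  refine ⟨(List.isChain_append.1 h.1).2.1, ?_⟩
  rintro x y z ⟨s', t', rfl⟩
  exact h.2 _ _ _ ⟨s ++ s', t', by simp⟩

/-- moral relation -/
def Mor (D : V → V → Prop) (B : Set V) (u v : V) : Prop :=
  u ∈ B ∧ v ∈ B ∧ (D u v ∨ D v u ∨ ∃ w ∈ B, D u w ∧ D v w)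

theorem Mor.symm {D : V → V → Prop} {B : Set V} (u v : V) (h : Mor D B u v) : Mor D B v u := by
  obtain ⟨h1, h2, h3⟩ := h
  refine ⟨h2, h1, ?_⟩
  rcases h3 with h | h | ⟨w, hw, h, h'⟩
  · tauto
  · tauto
  · exact Or.inr (Or.inr ⟨w, hw, h', h⟩)

theorem anc_step {D : V → V → Prop} {S : Set V} {u v : V} (h : D u v) (hv : v ∈ anc D S) :
    u ∈ anc D S := by
  obtain ⟨w, hw, hvw⟩ := hv
  exact ⟨w, hw, .head h hvw⟩

theorem anc_mono {D : V → V → Prop} {S T : Set V} (h : S ⊆ T) : anc D S ⊆ anc D T := by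
  rintro u ⟨v, hv, huv⟩; exact ⟨v, h hv, huv⟩

theorem subset_anc (D : V → V → Prop) (S : Set V) : S ⊆ anc D S := fun u hu => ⟨u, hu, .refl⟩

theorem anc_anc {D : V → V → Prop} {S T : Set V} (h : S ⊆ anc D T) : anc D S ⊆ anc D T := by
  rintro u ⟨v, hv, huv⟩
  obtain ⟨w, hw, hvw⟩ := h hv
  exact ⟨w, hw, huv.trans hvw⟩

theorem act_out_anc {D : V → V → Prop} {Z B : Set V} (hB : ∀ u v, D u v → v ∈ B → u ∈ B)
    (hZ : anc D Z ⊆ B) (t : V) (ht : t ∈ B) :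
    ∀ (l : List V) (a b : V), Act D Z (a :: b :: l) → (a :: b :: l).getLast? = some t → D a b →
      b ∈ B := by
  intro l
  induction l with
  | nil => intro a b _ hl _; simp at hl; subst hl; exact ht
  | cons c l ih =>
    intro a b hact hl hab
    rw [act_cons3] at hact
    obtain ⟨-, hok, hact⟩ := hact
    rcases hok with h | h
    · exact hZ h.2
    · have hbc : D b c := by
        rcases List.isChain_cons_cons.1 hact.1 |>.1 with h' | h'
        · exact h'
        · exact absurd ⟨hab, h'⟩ h.1
      exact hB _ _ hbc (ih b c hact (by simpa using hl) hbc)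

theorem moral_of_act {D : V → V → Prop} (hac : Acyclic D) {Z B : Set V}
    (hB : ∀ u v, D u v → v ∈ B → u ∈ B)
    (hZ : anc D Z ⊆ B) (t : V) (ht : t ∈ B) (htZ : t ∉ Z) :
    ∀ (n : ℕ) (l : List V) (a : V), l.length ≤ n → Act D Z (a :: l) →
      (a :: l).getLast? = some t → a ∈ B → a ∉ Z → Con (Mor D B) Z a t := by
  intro n
  induction n with
  | zero =>
    intro l a hn _ hl _ haZ
    have : l = [] := by simpa using hn
    subst this; simp at hl; subst hl; exact ⟨haZ, .refl⟩
  | succ n ih =>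
    intro l a hn hact hl haB haZ
    match l with
    | [] => simp at hl; subst hl; exact ⟨haZ, .refl⟩
    | [b] =>
      simp at hl; subst hl
      rw [act_two] at hact
      exact ⟨haZ, .single ⟨⟨haB, ht, by tauto⟩, htZ⟩⟩
    | b :: c :: r =>
      have hadj : D a b ∨ D b a := (List.isChain_cons_cons.1 hact.1).1
      have hbB : b ∈ B := by
        rcases hadj with h | h
        · exact act_out_anc hB hZ t ht _ a b hact hl h
        · exact hB _ _ h haB
      rw [act_cons3] at hact
      obtain ⟨-, hok, hact'⟩ := hact
      have hl' : (b :: c :: r).getLast? = some t := by simpa using hl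
      rcases hok with h | h
      · have hcB : c ∈ B := hB _ _ h.1.2 hbB
        have hcZ : c ∉ Z := by
          match r with
          | [] => simp at hl'; subst hl'; exact htZ
          | d :: r =>
            rw [act_cons3] at hact'
            rcases hact'.2.1 with h' | h'
            · exact absurd (.single h'.1.1) (hac _ _ h.1.2)
            · exact h'.2
        have hact'' : Act D Z (c :: r) := act_suffix (s := [b]) (by simpa using hact')
        have := ih r c (by simp at hn; omega) hact'' (by simpa using hl') hcB hcZ
        exact ⟨haZ, .head ⟨⟨haB, hcB, Or.inr (Or.inr ⟨b, hbB, h.1⟩)⟩, hcZ⟩ this.2⟩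
      · have := ih (c :: r) b (by simp at hn ⊢; omega) hact' hl' hbB h.2
        exact ⟨haZ, .head ⟨⟨haB, hbB, by tauto⟩, h.2⟩ this.2⟩

/-- moral separation implies d-separation -/
theorem dsep_of_moral {D : V → V → Prop} (hac : Acyclic D) {Z : Set V} {s t : V}
    (hs : s ∉ Z) (ht : t ∉ Z)
    (h : ¬ Con (Mor D (anc D ({s, t} ∪ Z))) Z s t) (p : List V)
    (hp : IsPath (fun a b => D a b ∨ D b a) s t p) : Blocked D Z p := by
  by_contra hb
  apply h
  obtain ⟨h1, h2, h3, -⟩ := hp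
  cases p with
  | nil => simp at h2
  | cons a l =>
    simp at h2; subst h2
    exact moral_of_act hac (fun u v => anc_step) (anc_mono (by simp)) t
      (subset_anc _ _ (by simp)) ht l.length l a le_rfl ⟨h1, (not_blocked_iff _ _ _).1 hb⟩ h3
      (subset_anc _ _ (by simp)) hs

/-- active path ending at `s` -/
def AP (D : V → V → Prop) (Z : Set V) (s v : V) : Prop :=
  ∃ l : List V, Act D Z (v :: l) ∧ (v :: l).getLast? = some s ∧ (v :: l).Nodup

theorem AP.sub {D : V → V → Prop} {Z : Set V} {s v : V} {l : List V}
    (h1 : Act D Z l) (h2 : l.getLast? = some s) (h3 : l.Nodup) (hv : v ∈ l) : AP D Z s v := by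
  obtain ⟨a, b, rfl⟩ := List.append_of_mem hv
  exact ⟨b, act_suffix h1, by simpa using h2, (List.nodup_append.1 h3).2.1⟩

theorem AP.fwd {D : V → V → Prop} (hac : Acyclic D) {Z : Set V} {s u v : V}
    (h : AP D Z s u) (hu : u ∉ Z) (huv : D u v) : AP D Z s v := by
  obtain ⟨l, h1, h2, h3⟩ := h
  by_cases hv : v ∈ u :: l
  · exact AP.sub h1 h2 h3 hv
  · refine ⟨u :: l, ?_, by simpa using h2, List.nodup_cons.2 ⟨hv, h3⟩⟩
    cases l with
    | nil => rw [act_two]; exact Or.inr huv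
    | cons c l =>
      rw [act_cons3]
      exact ⟨Or.inr huv, Or.inr ⟨fun h => hac _ _ huv (.single h.1), hu⟩, h1⟩

theorem AP.fwds {D : V → V → Prop} (hac : Acyclic D) {Z : Set V} {s u t : V}
    (h : AP D Z s u) (hu : u ∉ anc D Z) (hut : Relation.ReflTransGen D u t) : AP D Z s t := by
  have key : AP D Z s t ∧ Relation.ReflTransGen D u t := by
    induction hut with
    | refl => exact ⟨h, .refl⟩
    | tail h1 h2 ih =>
      refine ⟨AP.fwd hac ih.1 (fun hZ => hu ⟨_, hZ, ih.2⟩) h2, ih.2.tail h2⟩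
  exact key.1

theorem chain_act {D : V → V → Prop} (hac : Acyclic D) {Z : Set V} {s u : V}
    (hus : Relation.ReflTransGen D u s) : u ∉ anc D Z → 
    ∃ l, Act D Z (u :: l) ∧ (u :: l).getLast? = some s ∧ (u :: l).Nodup ∧
      (∀ x ∈ u :: l, Relation.ReflTransGen D u x) ∧ (∀ c r, l = c :: r → D u c) := by
  induction hus using Relation.ReflTransGen.head_induction_on with
  | refl => intro _; exact ⟨[], act_one _ _ _, by simp, by simp, by simp [Relation.ReflTransGen.refl], by simp⟩
  | head h1 h2 ih =>
    rename_i u c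
    intro hu
    have hc : c ∉ anc D Z := fun h => hu (anc_step h1 h)
    obtain ⟨l, g1, g2, g3, g4, g5⟩ := ih hc
    refine ⟨c :: l, ?_, by simpa using g2, ?_, ?_, ?_⟩
    · cases l with
      | nil => rw [act_two]; exact Or.inl h1
      | cons d l =>
        rw [act_cons3]
        refine ⟨Or.inl h1, Or.inr ⟨?_, fun h => hc (subset_anc _ _ h)⟩, g1⟩
        rintro ⟨-, h⟩
        exact hac _ _ h (.single (g5 d l rfl))
    · exact List.nodup_cons.2 ⟨fun h => hac _ _ h1 (g4 _ h), g3⟩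
    · intro x hx
      rcases List.mem_cons.1 hx with rfl | hx
      · exact .refl
      · exact .head h1 (g4 x hx)
    · intro c' r h; simp at h; rw [← h.1]; exact h1

theorem AP.restart {D : V → V → Prop} (hac : Acyclic D) {Z : Set V} {s u v : V}
    (hu : u ∉ anc D Z) (hus : Relation.ReflTransGen D u s) (hvu : D v u) : AP D Z s v := by
  obtain ⟨l, g1, g2, g3, g4, g5⟩ := chain_act hac hus hu
  refine ⟨u :: l, ?_, by simpa using g2, List.nodup_cons.2 ⟨fun h => hac _ _ hvu (g4 _ h), g3⟩⟩
  cases l with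
  | nil => rw [act_two]; exact Or.inl hvu
  | cons d l =>
    rw [act_cons3]
    refine ⟨Or.inl hvu, Or.inr ⟨?_, fun h => hu (subset_anc _ _ h)⟩, g1⟩
    rintro ⟨-, h⟩
    exact hac _ _ h (.single (g5 d l rfl))

/-- extending backwards at an ancestor of `Z`. -/
theorem AP.back {D : V → V → Prop} {Z : Set V} {s u v : V} {l : List V}
    (h1 : Act D Z (u :: l)) (h2 : (u :: l).getLast? = some s) (h3 : (u :: l).Nodup)
    (hu : u ∈ anc D Z) (hvu : D v u)
    (hc : ∀ c r, l = c :: r → D c u ∨ u ∉ Z) : AP D Z s v := by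
  by_cases hv : v ∈ u :: l
  · exact AP.sub h1 h2 h3 hv
  · refine ⟨u :: l, ?_, by simpa using h2, List.nodup_cons.2 ⟨hv, h3⟩⟩
    cases l with
    | nil => rw [act_two]; exact Or.inl hvu
    | cons c l =>
      rw [act_cons3]
      refine ⟨Or.inl hvu, ?_, h1⟩
      by_cases h : D c u
      · exact Or.inl ⟨⟨hvu, h⟩, hu⟩
      · refine Or.inr ⟨fun h' => h h'.2, ?_⟩
        rcases hc c l rfl with h' | h'
        · exact absurd h' h
        · exact h'

theorem AP.step {D : V → V → Prop} (hac : Acyclic D) {Z : Set V} {s t u v : V}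
    (hs : s ∉ Z)
    (h : AP D Z s u) (hu : u ∉ Z) (huv : Mor D (anc D ({s, t} ∪ Z)) u v) :
    AP D Z s t ∨ AP D Z s v := by
  have cases3 : ∀ w ∈ anc D ({s, t} ∪ Z), w ∈ anc D Z ∨ (w ∉ anc D Z ∧
      (Relation.ReflTransGen D w s ∨ Relation.ReflTransGen D w t)) := by
    rintro w ⟨x, hx, hwx⟩
    by_cases hw : w ∈ anc D Z
    · exact Or.inl hw
    · refine Or.inr ⟨hw, ?_⟩
      rcases hx with (rfl | rfl) | hx
      · exact Or.inl hwx
      · exact Or.inr hwx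
      · exact absurd ⟨x, hx, hwx⟩ hw
  obtain ⟨huB, hvB, h' | h' | ⟨w, hwB, huw, hvw⟩⟩ := huv
  · exact Or.inr (h.fwd hac hu h')
  · rcases cases3 u huB with hu' | ⟨hu', hs' | ht'⟩
    · obtain ⟨l, h1, h2, h3⟩ := h
      exact Or.inr (AP.back h1 h2 h3 hu' h' (fun _ _ _ => Or.inr hu))
    · exact Or.inr (AP.restart hac hu' hs' h')
    · exact Or.inl (h.fwds hac hu' ht')
  · rcases cases3 w hwB with hw' | ⟨hw', hs' | ht'⟩
    · right
      obtain ⟨l, h1, h2, h3⟩ := h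
      by_cases hwl : w ∈ u :: l
      · obtain ⟨a, b, hab⟩ := List.append_of_mem hwl
        rw [hab] at h1 h2 h3
        refine AP.back (act_suffix h1) (by simpa using h2) (List.nodup_append.1 h3).2.1 hw' hvw ?_
        rintro c r rfl
        rcases List.eq_nil_or_concat a with rfl | ⟨a', x, rfl⟩
        · simp at hab
          exact Or.inr (hab.1 ▸ hu)
        · rcases h1.2 x w c ⟨a', r, by simp⟩ with g | g
          · exact Or.inl g.1.2
          · exact Or.inr g.2
      · refine AP.back (l := u :: l) ?_ (by simpa using h2) (List.nodup_cons.2 ⟨hwl, h3⟩) hw' hvw ?_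
        · cases l with
          | nil => rw [act_two]; exact Or.inr huw
          | cons c l =>
            rw [act_cons3]
            exact ⟨Or.inr huw, Or.inr ⟨fun h => hac _ _ huw (.single h.1), hu⟩, h1⟩
        · intro c r h; simp at h; rw [← h.1]; exact Or.inl huw
    · exact Or.inr (AP.restart hac hw' hs' hvw)
    · exact Or.inl ((h.fwd hac hu huw).fwds hac hw' ht')

/-- d-separation implies moral separation -/
theorem moral_of_dsep {D : V → V → Prop} (hac : Acyclic D) {Z : Set V} {s t : V}
    (h : DSep D {s} {t} Z) :
    ¬ Con (Mor D (anc D ({s, t} ∪ Z))) Z s t := by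
  intro hc
  rw [Set.pair_comm] at hc
  have hc' := hc.symm Mor.symm
  have key : AP D Z t s ∨ AP D Z t s := by
    refine hc'.ind (P := fun x => AP D Z t s ∨ AP D Z t x) 
      (Or.inr ⟨[], act_one _ _ _, by simp, by simp⟩) ?_
    rintro x y hx (h | h) hxy _
    · exact Or.inl h
    · exact AP.step hac hc'.1 h hx.not_mem_right hxy
  obtain ⟨l, h1, h2, h3⟩ := key.elim id id
  exact (not_blocked_iff _ _ _).2 h1.2 (h s rfl t rfl (s :: l) ⟨h1.1, by simp, h2, h3⟩)

end Helpers

end CausalGraph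

namespace CausalGraph

section Helpers2
variable {V : Type*} [Fintype V] [DecidableEq V]

theorem Con.mono {R R' : V → V → Prop} {U U' : Set V} {a b : V} (h : Con R U a b)
    (ha : a ∉ U') (hs : ∀ x y, x ∉ U → y ∉ U → R x y → (x = y ∨ R' x y) ∧ (x ∉ U' → y ∉ U')) :
    Con R' U' a b := by
  refine h.ind (P := fun b => Con R' U' a b) ⟨ha, .refl⟩ ?_
  intro x y hx ih hxy hy
  obtain ⟨h1, h2⟩ := hs x y hx.not_mem_right hy hxy
  rcases h1 with rfl | h1
  · exact ih
  · exact ih.tail h1 (h2 ih.not_mem_right)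

theorem H0_adj (D : V → V → Prop) (A Y : V) (L : Set V) (u v : V) :
    (H0 D A Y L).Adj u v ↔ u ≠ v ∧ Mor (pbd D A Y) (ancAYL D A Y L) u v := by
  unfold H0 moral
  rw [SimpleGraph.fromRel_adj]
  constructor
  · rintro ⟨h, h' | h'⟩
    · exact ⟨h, h'⟩
    · exact ⟨h, Mor.symm _ _ h'⟩
  · rintro ⟨h, h'⟩
    exact ⟨h, Or.inl h'⟩

theorem con_H0 {D : V → V → Prop} {A Y : V} {L Z : Set V} {u v : V} :
    Con (H0 D A Y L).Adj Z u v ↔ Con (Mor (pbd D A Y) (ancAYL D A Y L)) Z u v := by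
  constructor
  · intro h
    exact h.mono h.1 (fun x y _ hy hxy => ⟨Or.inr ((H0_adj _ _ _ _ _ _).1 hxy).2, fun _ => hy⟩)
  · intro h
    refine h.mono h.1 (fun x y _ hy hxy => ⟨?_, fun _ => hy⟩)
    by_cases hx : x = y
    · exact Or.inl hx
    · exact Or.inr ((H0_adj _ _ _ _ _ _).2 ⟨hx, hxy⟩)

theorem con_H0_of_H1 {D : V → V → Prop} {A Y : V} {L N Z : Set V} (hL : L ⊆ Z)
    (hZ : ∀ z ∈ Z, z ∉ Ignore D A Y L N) {u v : V}
    (h : Con (H1 D A Y L N).Adj Z u v) : Con (H0 D A Y L).Adj Z u v := by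
  refine h.ind (P := fun v => Con (H0 D A Y L).Adj Z u v) ⟨h.1, .refl⟩ ?_
  intro x y hx ih hxy hy
  have hxZ := hx.not_mem_right
  have key : ∀ a b, a ∉ Z → b ∉ Z → (∃ p : List V, IsPath (H0 D A Y L).Adj a b p ∧
          ∀ x ∈ p, x ≠ a → x ≠ b → x ∈ Ignore D A Y L N) → Con (H0 D A Y L).Adj Z a b := by
    rintro a b ha hb ⟨p, hp, hI⟩
    refine (path_iff _ _ _ _).1 ⟨p, hp, ?_⟩
    intro z hz hzZ
    by_cases h1 : z = a
    · exact ha (h1 ▸ hzZ)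
    by_cases h2 : z = b
    · exact hb (h2 ▸ hzZ)
    exact hZ z hzZ (hI z hz h1 h2)
  unfold H1 at hxy
  rw [SimpleGraph.fromRel_adj] at hxy
  refine ih.trans ?_
  rcases hxy.2 with ⟨-, -, h | h | h⟩ | ⟨-, -, h | h | h⟩
  · exact key x y hxZ hy h
  · exact absurd (hL h.2) hy
  · exact absurd (hL h.2) hy
  · exact (key y x hy hxZ h).symm (fun a b h => h.symm)
  · exact absurd (hL h.2) hxZ
  · exact absurd (hL h.2) hxZ

theorem H0_mem_right {D : V → V → Prop} {A Y : V} {L : Set V} {u v : V}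
    (h : (H0 D A Y L).Adj u v) : v ∈ ancAYL D A Y L := ((H0_adj _ _ _ _ _ _).1 h).2.2.1

theorem con_H1_of_H0 {D : V → V → Prop} {A Y : V} {L N Z : Set V} {u v : V}
    (hu : u ∈ H1verts D A Y L N) (hv : v ∈ H1verts D A Y L N)
    (h : Con (H0 D A Y L).Adj Z u v) : Con (H1 D A Y L N).Adj Z u v := by
  have key : ∃ w ∈ H1verts D A Y L N, Con (H1 D A Y L N).Adj Z u w ∧
      Relation.ReflTransGen (fun x y => (H0 D A Y L).Adj x y ∧ y ∈ Ignore D A Y L N) w v := by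
    refine h.ind (P := fun v => ∃ w ∈ H1verts D A Y L N, Con (H1 D A Y L N).Adj Z u w ∧
      Relation.ReflTransGen (fun x y => (H0 D A Y L).Adj x y ∧ y ∈ Ignore D A Y L N) w v)
      ⟨u, hu, ⟨h.1, .refl⟩, .refl⟩ ?_
    rintro x y hx ⟨w, hw, hcw, hwx⟩ hxy hy
    by_cases hyI : y ∈ Ignore D A Y L N
    · exact ⟨w, hw, hcw, hwx.tail ⟨hxy, hyI⟩⟩
    · have hyW : y ∈ H1verts D A Y L N := ⟨H0_mem_right hxy, hyI⟩
      refine ⟨y, hyW, ?_, .refl⟩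
      by_cases hwy : w = y
      · exact hwy ▸ hcw
      refine hcw.tail ?_ hy
      unfold H1
      rw [SimpleGraph.fromRel_adj]
      refine ⟨hwy, Or.inl ⟨hw, hyW, Or.inl ?_⟩⟩
      have hcon : Con (H0 D A Y L).Adj {x | x ≠ w ∧ x ≠ y ∧ x ∉ Ignore D A Y L N} w y := by
        refine ⟨by simp, .tail (Relation.ReflTransGen.mono ?_ _ _ hwx) ⟨hxy, by simp⟩⟩
        rintro a b ⟨hab, hb⟩
        exact ⟨hab, fun h => h.2.2 hb⟩
      obtain ⟨p, hp, hpU⟩ := (path_iff _ _ _ _).2 hcon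
      refine ⟨p, hp, fun x hx h1 h2 => ?_⟩
      by_contra h3
      exact hpU x hx ⟨h1, h2, h3⟩
  obtain ⟨w, hw, hcw, hwv⟩ := key
  rcases Relation.ReflTransGen.cases_tail hwv with rfl | ⟨x, -, -, hvI⟩
  · exact hcw
  · exact absurd hvI hv.2

theorem pbd_sub {D : V → V → Prop} {A Y u v : V} (h : Relation.ReflTransGen (pbd D A Y) u v) :
    Relation.ReflTransGen D u v := Relation.ReflTransGen.mono (fun _ _ h => h.1) _ _ h

theorem pbd_acyclic {D : V → V → Prop} (hac : Acyclic D) (A Y : V) : Acyclic (pbd D A Y) :=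
  fun u v h h' => hac u v h.1 (pbd_sub h')

theorem pbd_of {D : V → V → Prop} {A Y u v : V} (h : Relation.ReflTransGen D u v) :
    Relation.ReflTransGen (pbd D A Y) u v ∨ Relation.ReflTransGen (pbd D A Y) u A := by
  induction h using Relation.ReflTransGen.head_induction_on with
  | refl => exact Or.inl .refl
  | head h1 h2 ih =>
    rename_i a c
    by_cases ha : a = A
    · subst ha; exact Or.inr .refl
    · have : pbd D A Y a c := ⟨h1, fun h => ha h.1⟩
      rcases ih with ih | ih
      · exact Or.inl (.head this ih)
      · exact Or.inr (.head this ih)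

theorem anc_sub_pbd {D : V → V → Prop} {A Y : V} {L Z : Set V} (hL : L ⊆ Z) :
    ancAYL D A Y L ⊆ anc (pbd D A Y) ({A, Y} ∪ Z) := by
  rintro u ⟨v, hv, huv⟩
  rcases pbd_of (A := A) (Y := Y) huv with h | h
  · refine ⟨v, ?_, h⟩
    rcases hv with hv | hv
    · exact Or.inl hv
    · exact Or.inr (hL hv)
  · exact ⟨A, by simp, h⟩

theorem anc_pbd_eq {D : V → V → Prop} {A Y : V} {L Z : Set V} (hL : L ⊆ Z)
    (hZ : Z ⊆ ancAYL D A Y L) :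
    anc (pbd D A Y) ({A, Y} ∪ Z) = ancAYL D A Y L := by
  refine Set.Subset.antisymm ?_ (anc_sub_pbd hL)
  rintro u ⟨v, hv, huv⟩
  have hv' : v ∈ anc D ({A, Y} ∪ L) := by
    rcases hv with hv | hv
    · exact subset_anc _ _ (Or.inl hv)
    · exact hZ hv
  obtain ⟨w, hw, hvw⟩ := hv'
  exact ⟨w, hw, (pbd_sub huv).trans hvw⟩

variable {D : V → V → Prop} {A Y : V} {L N Z : Set V}

theorem A_forb : A ∈ forb D A Y := Or.inr rfl

theorem Y_forb (hAY : A ≠ Y) (h : Relation.ReflTransGen D A Y) : Y ∈ forb D A Y :=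
  Or.inl ⟨Y, ⟨hAY.symm, h, .refl⟩, .refl⟩

theorem dsep_iff_H0 (hac : Acyclic D) (hL : L ⊆ Z) (hZ : Z ⊆ ancAYL D A Y L)
    (hA : A ∉ Z) (hY : Y ∉ Z) :
    DSep (pbd D A Y) {A} {Y} Z ↔ ¬ Con (H0 D A Y L).Adj Z A Y := by
  rw [con_H0]
  constructor
  · intro h
    have := moral_of_dsep (pbd_acyclic hac A Y) h
    rwa [anc_pbd_eq hL hZ] at this
  · intro h s hs t ht p hp
    rw [Set.mem_singleton_iff] at hs ht
    subst hs ht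
    refine dsep_of_moral (pbd_acyclic hac _ _) hA hY ?_ p hp
    rwa [anc_pbd_eq hL hZ]

theorem gac_inter (hac : Acyclic D) (hAY : A ≠ Y) (hA : Relation.ReflTransGen D A Y)
    (h : GAC D A Y L N Z) : GAC D A Y L N (Z ∩ ancAYL D A Y L) := by
  obtain ⟨h1, h2, h3, h4⟩ := h
  have hAZ : A ∉ Z := fun h => Set.eq_empty_iff_forall_notMem.1 h2 _ ⟨h, A_forb⟩
  have hYZ : Y ∉ Z := fun h => Set.eq_empty_iff_forall_notMem.1 h2 _ ⟨h, Y_forb hAY hA⟩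
  have hL : L ⊆ Z ∩ ancAYL D A Y L := fun l hl => ⟨h3 hl, subset_anc _ _ (Or.inr hl)⟩
  refine ⟨?_, ?_, hL, fun x hx => h4 hx.1⟩
  · rw [dsep_iff_H0 hac hL Set.inter_subset_right (fun h => hAZ h.1) (fun h => hYZ h.1), con_H0]
    intro hc
    refine moral_of_dsep (pbd_acyclic hac A Y) h1 (hc.mono hAZ ?_)
    rintro x y hx hy ⟨g1, g2, g3⟩
    refine ⟨Or.inr ⟨anc_sub_pbd h3 g1, anc_sub_pbd h3 g2, ?_⟩, fun _ h => hy ⟨h, g2⟩⟩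
    rcases g3 with g | g | ⟨w, hw, g⟩
    · exact Or.inl g
    · exact Or.inr (Or.inl g)
    · exact Or.inr (Or.inr ⟨w, anc_sub_pbd h3 hw, g⟩)
  · exact Set.eq_empty_iff_forall_notMem.2
      (fun x hx => Set.eq_empty_iff_forall_notMem.1 h2 x ⟨hx.1.1, hx.2⟩)

theorem A_W : A ∈ H1verts D A Y L N :=
  ⟨subset_anc _ _ (by simp), fun h => h.1.2 (by simp)⟩

theorem Y_W : Y ∈ H1verts D A Y L N :=
  ⟨subset_anc _ _ (by simp), fun h => h.1.2 (by simp)⟩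

/-- characterization of the criterion through `H¹` -/
theorem gac_iff (hac : Acyclic D) (hAY : A ≠ Y) (hA : Relation.ReflTransGen D A Y)
    (hZ : Z ⊆ ancAYL D A Y L) :
    GAC D A Y L N Z ↔ (Z ⊆ H1verts D A Y L N ∧ A ∉ Z ∧ Y ∉ Z ∧ L ⊆ Z ∧
      ¬ Con (H1 D A Y L N).Adj Z A Y) := by
  constructor
  · rintro ⟨h1, h2, h3, h4⟩
    have h2' := Set.eq_empty_iff_forall_notMem.1 h2
    have hAZ : A ∉ Z := fun h => h2' _ ⟨h, A_forb⟩
    have hYZ : Y ∉ Z := fun h => h2' _ ⟨h, Y_forb hAY hA⟩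
    have hI : ∀ z ∈ Z, z ∉ Ignore D A Y L N := by
      rintro z hz ⟨-, h | h⟩
      · exact h.2 (h4 hz)
      · exact h2' z ⟨hz, h⟩
    refine ⟨fun z hz => ⟨hZ hz, hI z hz⟩, hAZ, hYZ, h3, fun hc => ?_⟩
    rw [dsep_iff_H0 hac h3 hZ hAZ hYZ] at h1
    exact h1 (con_H0_of_H1 h3 hI hc)
  · rintro ⟨h1, hAZ, hYZ, h3, hc⟩
    have hz : ∀ z ∈ Z, z ∈ N ∧ z ∉ forb D A Y := by
      intro z hz
      by_contra hcon
      refine (h1 hz).2 ⟨⟨hZ hz, ?_⟩, ?_⟩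
      · rintro (rfl | h)
        · exact hAZ hz
        · rw [Set.mem_singleton_iff] at h
          exact hYZ (h ▸ hz)
      · by_cases hN : z ∈ N
        · right; by_contra hf; exact hcon ⟨hN, hf⟩
        · exact Or.inl ⟨trivial, hN⟩
    refine ⟨?_, Set.eq_empty_iff_forall_notMem.2 fun x hx => (hz x hx.1).2 hx.2, h3,
      fun z h => (hz z h).1⟩
    rw [dsep_iff_H0 hac h3 hZ hAZ hYZ]
    exact fun h => hc (con_H1_of_H0 A_W Y_W h)

theorem H1_mem {u v : V} (h : (H1 D A Y L N).Adj u v) :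
    u ∈ H1verts D A Y L N ∧ v ∈ H1verts D A Y L N := by
  unfold H1 at h
  rw [SimpleGraph.fromRel_adj] at h
  rcases h.2 with h | h
  · exact ⟨h.1, h.2.1⟩
  · exact ⟨h.2.1, h.1⟩

theorem L_W (hLnd : L ∩ desc D {A} = ∅) (hN : {A, Y} ∪ L ⊆ N) : L ⊆ H1verts D A Y L N := by
  intro l hl
  have h2' := Set.eq_empty_iff_forall_notMem.1 hLnd
  refine ⟨subset_anc _ _ (Or.inr hl), ?_⟩
  rintro ⟨-, h | h | h⟩
  · exact h.2 (hN (Or.inr hl))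
  · obtain ⟨c, hc, hcl⟩ := h
    exact h2' l ⟨hl, A, rfl, hc.2.1.trans hcl⟩
  · rw [Set.mem_singleton_iff] at h
    exact h2' l ⟨hl, A, rfl, h ▸ .refl⟩

theorem main_thm
    (hacy : Acyclic D)
    (hAY : A ≠ Y) (hAancY : Relation.ReflTransGen D A Y)
    (hLnd : L ∩ desc D {A} = ∅) (hLY : Y ∉ L)
    (hN : {A, Y} ∪ L ⊆ N)
    (hadm : Admissible D A Y L N) (H : SimpleGraph V) (hH : H = H1 D A Y L N)
    (C O : Set V) (hC : C = cc H (H.neighborSet Y) A) (hO : O = bdry H C) :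
    MinimalGAC D A Y L N O ∧
    ∀ Z, MinimalGAC D A Y L N Z →
      DSep D {Y} (Z \ O) ({A} ∪ O) ∧ DSep D {A} (O \ Z) Z := by
  have hsym : ∀ x y, H.Adj x y → H.Adj y x := fun x y h => h.symm
  have hWmem : ∀ {u v}, H.Adj u v → u ∈ H1verts D A Y L N ∧ v ∈ H1verts D A Y L N := by
    intro u v h; rw [hH] at h; exact H1_mem h
  have giff : ∀ {Z}, Z ⊆ ancAYL D A Y L → 
      (GAC D A Y L N Z ↔ (Z ⊆ H1verts D A Y L N ∧ A ∉ Z ∧ Y ∉ Z ∧ L ⊆ Z ∧ ¬ Con H.Adj Z A Y)) := by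
    intro Z hZ; rw [hH]; exact gac_iff hacy hAY hAancY hZ
  have hCmem : ∀ w, w ∈ C ↔ Con H.Adj (H.neighborSet Y) A w := by
    intro w; rw [hC]; exact path_iff _ _ _ _
  have hAnY : ¬ H.Adj Y A := by
    intro h
    obtain ⟨Z0, hZ0⟩ := hadm
    have h0 := gac_inter hacy hAY hAancY hZ0
    obtain ⟨-, h1, h2, -, h3⟩ := (giff Set.inter_subset_right).1 h0
    exact h3 ⟨h1, .single ⟨h.symm, h2⟩⟩
  have hAC : A ∈ C := (hCmem A).2 ⟨hAnY, .refl⟩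
  have hYC : Y ∉ C := by
    intro h
    rw [hCmem] at h
    rcases Relation.ReflTransGen.cases_tail h.2 with h' | ⟨x, hx, hxY, -⟩
    · exact hAY h'.symm
    · exact Con.not_mem_right ⟨h.1, hx⟩ hxY.symm
  have hCnb : ∀ x ∈ C, ¬ H.Adj Y x := fun x hx => ((hCmem x).1 hx).not_mem_right
  have hCstep : ∀ x y, x ∈ C → H.Adj x y → y ∉ O → y ∈ C := by
    intro x y hx hxy hy
    by_contra h
    exact hy (hO ▸ ⟨h, x, hx, hxy.symm⟩)
  have hOnb : ∀ o ∈ O, H.Adj Y o := by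
    intro o ho
    rw [hO] at ho
    obtain ⟨h1, u, hu, hou⟩ := ho
    by_contra h
    exact h1 ((hCmem o).2 (((hCmem u).1 hu).tail hou.symm h))
  have hOC : ∀ o ∈ O, o ∉ C ∧ ∃ u ∈ C, H.Adj o u := by
    intro o ho; rw [hO] at ho; exact ho
  have hCcl : ∀ x y, x ∈ C → Con H.Adj O x y → y ∈ C := by
    intro x y hx h
    exact h.ind (P := fun y => y ∈ C) hx (fun a b _ ha hab hb => hCstep a b ha hab hb)
  have hOW : O ⊆ H1verts D A Y L N := fun o ho => (hWmem (hOnb o ho)).2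
  have hOAn : O ⊆ ancAYL D A Y L := fun o ho => (hOW ho).1
  have hAO : A ∉ O := fun h => (hOC A h).1 hAC
  have hYO : Y ∉ O := fun h => (hOnb Y h).ne rfl
  have hLO : L ⊆ O := by
    intro l hl
    have hlW := L_W hLnd hN hl
    have hlY : H.Adj Y l := by
      rw [hH]; unfold H1; rw [SimpleGraph.fromRel_adj]
      exact ⟨fun h => hLY (h ▸ hl), Or.inl ⟨Y_W, hlW, Or.inr (Or.inr ⟨rfl, hl⟩)⟩⟩
    have hlA : H.Adj A l := by
      rw [hH]; unfold H1; rw [SimpleGraph.fromRel_adj]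
      refine ⟨fun h => ?_, Or.inl ⟨A_W, hlW, Or.inr (Or.inl ⟨rfl, hl⟩)⟩⟩
      exact Set.eq_empty_iff_forall_notMem.1 hLnd l ⟨hl, A, rfl, h ▸ .refl⟩
    by_contra h
    exact hCnb _ (hCstep A l hAC hlA h) hlY
  have hOG : GAC D A Y L N O :=
    (giff hOAn).2 ⟨hOW, hAO, hYO, hLO, fun h => hYC (hCcl A Y hAC h)⟩
  have hOforb := Set.eq_empty_iff_forall_notMem.1 hOG.2.1
  have hAO' : ∀ u ∈ C, ∀ Z' ⊆ O, Con H.Adj Z' A u := by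
    intro u hu Z' hZ'
    refine ((hCmem u).1 hu).mono (fun h => hAO (hZ' h)) ?_
    intro x y _ hy hxy
    exact ⟨Or.inr hxy, fun _ h => hy (hOnb y (hZ' h))⟩
  refine ⟨⟨hOG, ?_⟩, ?_⟩
  · intro Z' hZ' hG
    obtain ⟨-, h1, h2, -, h3⟩ := (giff (hZ'.1.trans hOAn)).1 hG
    obtain ⟨o, ho, hoZ⟩ := Set.exists_of_ssubset hZ'
    obtain ⟨-, u, hu, hou⟩ := hOC o ho
    exact h3 (((hAO' u hu Z' hZ'.1).tail hou.symm hoZ).tail (hOnb o ho).symm h2)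
  · intro Z hZ
    have hZAn : Z ⊆ ancAYL D A Y L := by
      by_contra hn
      refine hZ.2 (Z ∩ ancAYL D A Y L) ⟨Set.inter_subset_left, fun h => hn ?_⟩
        (gac_inter hacy hAY hAancY hZ.1)
      exact fun z hz => (h hz).2
    obtain ⟨hZW, hAZ, hYZ, hLZ, hcut⟩ := (giff hZAn).1 hZ.1
    have hZforb := Set.eq_empty_iff_forall_notMem.1 hZ.1.2.1
    have hanc : ∀ S ⊆ ancAYL D A Y L, anc D S ⊆ ancAYL D A Y L := fun S hS => anc_anc hS
    constructor
    · rintro s hs z ⟨hzZ, hzO⟩ p hp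
      rw [Set.mem_singleton_iff] at hs; subst hs
      have hzA : z ≠ A := fun h => hAZ (h ▸ hzZ)
      have hsY : s ≠ A := hAY.symm
      -- z is adjacent to the A-component of H - Z
      have hadj : ∃ u, Con H.Adj Z A u ∧ H.Adj u z := by
        have hsub : Z \ {z} ⊂ Z :=
          ⟨Set.sdiff_subset, fun h => (h hzZ).2 rfl⟩
        have hcon : Con H.Adj (Z \ {z}) A s := by
          by_contra hn
          refine hZ.2 _ hsub ((giff (hsub.1.trans hZAn)).2
            ⟨hsub.1.trans hZW, fun h => hAZ h.1, fun h => hYZ h.1, ?_, hn⟩)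
          intro l hl
          refine ⟨hLZ hl, fun h => ?_⟩
          rw [Set.mem_singleton_iff] at h
          exact hzO (h ▸ hLO hl)
        have : Con H.Adj Z A s ∨ ∃ u, Con H.Adj Z A u ∧ H.Adj u z := by
          refine hcon.ind (P := fun x => Con H.Adj Z A x ∨ ∃ u, Con H.Adj Z A u ∧ H.Adj u z)
            (Or.inl ⟨hAZ, .refl⟩) ?_
          rintro x y - (h | h) hxy hy
          · by_cases hyz : y = z
            · subst hyz; exact Or.inr ⟨x, h, hxy⟩
            · exact Or.inl (h.tail hxy (fun h' => hy ⟨h', hyz⟩))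
          · exact Or.inr h
        exact this.resolve_left hcut
      obtain ⟨u, hu, huz⟩ := hadj
      have huC : u ∈ C := by
        rw [hCmem]
        refine hu.ind (P := fun u => Con H.Adj (H.neighborSet s) A u) ⟨hAnY, .refl⟩ ?_
        intro x y hx ih hxy hy
        refine ih.tail hxy (fun h => ?_)
        exact hcut ((hx.tail hxy hy).tail (hsym _ _ h) hYZ)
      have hzC : z ∈ C := hCstep u z huC huz hzO
      have hno : ¬ Con (H0 D A s L).Adj O s z := by
        intro h
        have h1 := con_H1_of_H0 (N := N) Y_W (hZW hzZ) h
        rw [← hH] at h1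
        exact hYC (hCcl z s hzC (h1.symm hsym))
      rw [con_H0] at hno
      refine dsep_of_moral hacy ?_ ?_ ?_ p hp
      · rintro (h | h)
        · exact hsY h
        · exact hYO h
      · rintro (h | h)
        · exact hzA h
        · exact hzO h
      · intro hc
        have hB : anc D ({s, z} ∪ ({A} ∪ O)) ⊆ ancAYL D A s L := by
          apply hanc
          rintro x ((rfl | rfl) | (rfl | h))
          · exact Y_W (N := N).1
          · exact hZAn hzZ
          · exact A_W (N := N).1
          · exact hOAn h
        refine hno (hc.mono hYO ?_)
        rintro x y hx hy ⟨g1, g2, g3⟩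
        have hxA : x ≠ A := fun h => hx (Or.inl h)
        have hyA : y ≠ A := fun h => hy (Or.inl h)
        refine ⟨Or.inr ⟨hB g1, hB g2, ?_⟩, fun _ h => hy (Or.inr h)⟩
        rcases g3 with g | g | ⟨w, hw, g, g'⟩
        · exact Or.inl ⟨g, fun h => hxA h.1⟩
        · exact Or.inr (Or.inl ⟨g, fun h => hyA h.1⟩)
        · exact Or.inr (Or.inr ⟨w, hB hw, ⟨g, fun h => hxA h.1⟩, ⟨g', fun h => hyA h.1⟩⟩)
    · rintro s hs o ⟨hoO, hoZ⟩ p hp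
      rw [Set.mem_singleton_iff] at hs; subst hs
      have hno : ¬ Con (H0 D s Y L).Adj Z s o := by
        intro h
        have h1 := con_H1_of_H0 (N := N) A_W (hOW hoO) h
        rw [← hH] at h1
        exact hcut (h1.tail (hOnb o hoO).symm hYZ)
      rw [con_H0] at hno
      refine dsep_of_moral hacy hAZ hoZ ?_ p hp
      intro hc
      have hB : anc D ({s, o} ∪ Z) ⊆ ancAYL D s Y L := by
        apply hanc
        rintro x ((rfl | rfl) | h)
        · exact A_W (N := N).1
        · exact hOAn hoO
        · exact hZAn h
      have hpb : ∀ x w, w ∈ anc D ({s, o} ∪ Z) → D x w → pbd D s Y x w := by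
        rintro x w ⟨v, hv, hwv⟩ hxw
        refine ⟨hxw, ?_⟩
        rintro ⟨rfl, hw⟩
        rcases hv with (rfl | rfl) | hv
        · exact hacy _ _ hxw hwv
        · exact hOforb _ ⟨hoO, Or.inl ⟨w, hw, hwv⟩⟩
        · exact hZforb _ ⟨hv, Or.inl ⟨w, hw, hwv⟩⟩
      refine hno (hc.mono hAZ ?_)
      rintro x y hx hy ⟨g1, g2, g3⟩
      refine ⟨Or.inr ⟨hB g1, hB g2, ?_⟩, fun _ => hy⟩
      rcases g3 with g | g | ⟨w, hw, g, g'⟩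
      · exact Or.inl (hpb _ _ g2 g)
      · exact Or.inr (Or.inl (hpb _ _ g1 g))
      · exact Or.inr (Or.inr ⟨w, hB hw, hpb _ _ hw g, hpb _ _ hw g'⟩)

end Helpers2

end CausalGraph

namespace CausalGraph

/-- Theorem 2, part 2 (statement 12): if `(L, N)` is admissible then
`O_min = ∂_{H¹}(cc(nb_{H¹}(Y), A, H¹))` is a minimal set satisfying the graphical
adjustment criterion and, for every minimal set `Z` satisfying the criterion,
`Y ⊥⊥_G Z \ O_min | {A} ∪ O_min` and `A ⊥⊥_G O_min \ Z | Z`. -/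
theorem stmt12 {V : Type*} [Fintype V] [DecidableEq V]
    (D : V → V → Prop) (hacy : Acyclic D)
    (A Y : V) (L N : Set V)
    (hAY : A ≠ Y) (hAancY : Relation.ReflTransGen D A Y)
    (hLnd : L ∩ desc D {A} = ∅) (hLY : Y ∉ L)
    (hN : {A, Y} ∪ L ⊆ N)
    (hadm : Admissible D A Y L N) :
    MinimalGAC D A Y L N
        (bdry (H1 D A Y L N) (cc (H1 D A Y L N) ((H1 D A Y L N).neighborSet Y) A)) ∧
    ∀ Z, MinimalGAC D A Y L N Z →
      DSep D {Y}
        (Z \ bdry (H1 D A Y L N) (cc (H1 D A Y L N) ((H1 D A Y L N).neighborSet Y) A))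
        ({A} ∪ bdry (H1 D A Y L N) (cc (H1 D A Y L N) ((H1 D A Y L N).neighborSet Y) A)) ∧
      DSep D {A}
        (bdry (H1 D A Y L N) (cc (H1 D A Y L N) ((H1 D A Y L N).neighborSet Y) A) \ Z)
        Z := by
  exact main_thm hacy hAY hAancY hLnd hLY hN hadm _ rfl _ _ rfl rfl

end CausalGraph
end

section
/- Let H be a finite undirected simple graph, let A and Y be distinct non-adjacent vertices of H, and let V be a vertex of H with V ∉ {A,Y}. Let H' be the graph obtained from H by adding the edges A–V and V–Y (those not already present). Then the minimum cardinality of an A–Y cut in H' equals the minimum cardinality of an A–Y cut in H if and only if there exists a minimum A–Y cut Z of H with V ∈ Z. -/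
open Relation Set

namespace CausalGraph

theorem isCut_sup_iff {V : Type*} [Fintype V] [DecidableEq V]
    (H : SimpleGraph V) (A Y v₀ : V)
    (hAY : A ≠ Y) (hv₀A : v₀ ≠ A) (hv₀Y : v₀ ≠ Y) (Z : Set V) :
    IsCut Set.univ
      (H ⊔ SimpleGraph.fromRel (fun x y => (x = A ∧ y = v₀) ∨ (x = v₀ ∧ y = Y))) A Y Z
      ↔ IsCut Set.univ H A Y Z ∧ v₀ ∈ Z := by
  constructor
  · rintro ⟨h1, h2, h3⟩
    refine ⟨⟨h1, h2, ?_⟩, ?_⟩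
    · rintro p ⟨hc, hr⟩
      exact h3 p ⟨List.IsChain.imp (fun a b hab => Or.inl hab) hc, hr⟩
    · obtain ⟨z, hz, hzp⟩ := h3 [A, v₀, Y] (by
        refine ⟨?_, rfl, rfl, ?_⟩
        · show List.IsChain _ _
          simp [hv₀A.symm, hv₀Y]
        · simp [hAY, hv₀A.symm, hv₀Y])
      have hA : A ∉ Z := fun h => by
        have : A ∈ Z ∩ {A, Y} := ⟨h, by simp⟩
        rw [h2] at this; exact this
      have hY : Y ∉ Z := fun h => by
        have : Y ∈ Z ∩ {A, Y} := ⟨h, by simp⟩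
        rw [h2] at this; exact this
      simp only [List.mem_cons, List.not_mem_nil, or_false] at hzp
      rcases hzp with rfl | rfl | rfl
      · exact absurd hz hA
      · exact hz
      · exact absurd hz hY
  · rintro ⟨⟨h1, h2, h3⟩, hv⟩
    refine ⟨h1, h2, ?_⟩
    rintro p ⟨hc, hr⟩
    by_cases hvp : v₀ ∈ p
    · exact ⟨v₀, hv, hvp⟩
    · refine h3 p ⟨?_, hr⟩
      have hc' : List.IsChain _ p := hc
      show List.IsChain _ p
      rw [List.isChain_iff_getElem] at hc' ⊢
      intro i hi
      have hne : ∀ (j : ℕ) (hj : j < p.length), p[j] ≠ v₀ :=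
        fun j hj h => hvp (h ▸ List.getElem_mem hj)
      have := hc' i hi
      have a1 := hne i (by omega)
      have a2 := hne (i+1) hi
      simpa [a1, a2] using this

theorem isCut_compl {V : Type*} [Fintype V] [DecidableEq V]
    (H : SimpleGraph V) (A Y : V) (hAY : A ≠ Y) (hnadj : ¬ H.Adj A Y) :
    IsCut Set.univ H A Y ({A, Y}ᶜ) := by
  refine ⟨Set.subset_univ _, Set.compl_inter_self _, ?_⟩
  rintro p ⟨hc, hh, hl, hn⟩
  match p, hc, hh, hl with
  | [], _, hh, _ => simp at hh
  | [a], _, hh, hl =>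
    simp at hh hl
    exact absurd (hh.symm.trans hl) hAY
  | a :: b :: r, hc, hh, _ =>
    simp at hh
    subst hh
    have hc' : List.IsChain _ (a :: b :: r) := hc
    rw [List.isChain_cons_cons] at hc'
    refine ⟨b, ?_, by simp⟩
    intro hb
    rcases hb with hb | hb
    · exact hc'.1.ne hb.symm
    · rw [Set.mem_singleton_iff] at hb
      exact hnadj (hb ▸ hc'.1)

/-- Lemma 6 (statement 14): adding the edges `A–v₀` and `v₀–Y` to `H` leaves the
minimum `A`–`Y` cut size unchanged iff some minimum `A`–`Y` cut of `H` contains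
`v₀`. -/
theorem stmt14 {V : Type*} [Fintype V] [DecidableEq V]
    (H : SimpleGraph V) (A Y v₀ : V)
    (hAY : A ≠ Y) (hnadj : ¬ H.Adj A Y) (hv₀A : v₀ ≠ A) (hv₀Y : v₀ ≠ Y) :
    (sInf {n : ℕ | ∃ Z, IsCut Set.univ
          (H ⊔ SimpleGraph.fromRel (fun x y => (x = A ∧ y = v₀) ∨ (x = v₀ ∧ y = Y)))
          A Y Z ∧ Z.ncard = n}
        = sInf {n : ℕ | ∃ Z, IsCut Set.univ H A Y Z ∧ Z.ncard = n})
      ↔ ∃ Z, MinimumCut Set.univ H A Y Z ∧ v₀ ∈ Z := by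
  simp only [isCut_sup_iff H A Y v₀ hAY hv₀A hv₀Y]
  have hcut := isCut_compl H A Y hAY hnadj
  constructor
  · intro h
    have hne : {n : ℕ | ∃ Z, (IsCut Set.univ H A Y Z ∧ v₀ ∈ Z) ∧ Z.ncard = n}.Nonempty :=
      ⟨_, _, ⟨hcut, by simp [hv₀A, hv₀Y]⟩, rfl⟩
    obtain ⟨Z, ⟨hZ, hv⟩, hn⟩ := Nat.sInf_mem hne
    refine ⟨Z, ⟨hZ, fun Z' hZ' => ?_⟩, hv⟩
    rw [hn, h]
    exact Nat.sInf_le ⟨Z', hZ', rfl⟩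
  · rintro ⟨Z, ⟨hZ, hmin⟩, hv⟩
    apply le_antisymm
    · have hne : {n : ℕ | ∃ Z, IsCut Set.univ H A Y Z ∧ Z.ncard = n}.Nonempty :=
        ⟨_, _, hcut, rfl⟩
      obtain ⟨Z', hZ', hn⟩ := Nat.sInf_mem hne
      rw [← hn]
      refine le_trans (Nat.sInf_le ?_) (hmin Z' hZ')
      exact ⟨Z, ⟨hZ, hv⟩, rfl⟩
    · have hne : {n : ℕ | ∃ Z, (IsCut Set.univ H A Y Z ∧ v₀ ∈ Z) ∧ Z.ncard = n}.Nonempty :=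
        ⟨_, _, ⟨hZ, hv⟩, rfl⟩
      obtain ⟨Z', ⟨hZ', _⟩, hn⟩ := Nat.sInf_mem hne
      rw [← hn]
      exact Nat.sInf_le ⟨Z', hZ', rfl⟩

end CausalGraph
end

section
/- Let H be a finite undirected simple graph and let A and Y be distinct non-adjacent vertices of H. Then ∂_H(cc(nb_H(Y), A, H)) = { v ∈ nb_H(Y) : there exists a path in H from A to v whose only vertex belonging to nb_H(Y) is v }. -/
open Relation Set

namespace CausalGraph

/-- `∂_H(cc(nb_H(Y), A, H))` equals the set of neighbours `v` of `Y`
for which some path in `H` from `A` to `v` meets `nb_H(Y)` only at `v`. -/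
theorem stmt15 {V : Type*} [Fintype V] [DecidableEq V]
    (H : SimpleGraph V) (A Y : V)
    (hAY : A ≠ Y) (hnadj : ¬ H.Adj A Y) :
    bdry H (cc H (H.neighborSet Y) A)
      = {v | v ∈ H.neighborSet Y ∧
          ∃ p : List V, IsPath H.Adj A v p ∧ ∀ x ∈ p, x ∈ H.neighborSet Y → x = v} := by
  ext v
  constructor
  · rintro ⟨hv, u, ⟨p, ⟨hc, hh, hl, hn⟩, hp⟩, hadj⟩
    have hvp : v ∉ p := by
      intro hmem
      obtain ⟨s, t, rfl⟩ := List.append_of_mem hmem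
      apply hv
      have e : s ++ v :: t = (s ++ [v]) ++ t := by simp
      rw [e] at hc hh hn hp
      refine ⟨s ++ [v], ⟨hc.left_of_append, ?_, by simp, (List.nodup_append.1 hn).1⟩, ?_⟩
      · cases s <;> simpa using hh
      · intro x hx
        exact hp x (List.mem_append_left _ hx)
    have hpath : IsPath H.Adj A v (p ++ [v]) := by
      refine ⟨?_, ?_, by simp, ?_⟩
      · refine List.isChain_append.2 ⟨hc, by simp, ?_⟩
        intro x hx y hy
        rw [hl] at hx
        simp at hx hy
        subst hx; subst hy
        exact hadj.symm
      · simp [hh]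
      · simp [List.nodup_append, hn]
        intro a ha h
        exact hvp (h ▸ ha)
    refine ⟨?_, p ++ [v], hpath, ?_⟩
    · by_contra hnb
      apply hv
      refine ⟨_, hpath, ?_⟩
      intro x hx
      rcases List.mem_append.1 hx with h | h
      · exact hp x h
      · rw [List.mem_singleton.1 h]; exact hnb
    · intro x hx hxn
      rcases List.mem_append.1 hx with h | h
      · exact absurd hxn (hp x h)
      · exact List.mem_singleton.1 h
  · rintro ⟨hv, p, ⟨hc, hh, hl, hn⟩, hp⟩
    refine ⟨?_, ?_⟩
    · rintro ⟨q, ⟨-, -, hql, -⟩, hq⟩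
      exact hq v (List.mem_of_getLast? hql) hv
    · obtain ⟨q, rfl⟩ := List.getLast?_eq_some_iff.1 hl
      rcases List.eq_nil_or_concat q with rfl | ⟨r, u, rfl⟩
      · simp at hh
        subst hh
        exact absurd (SimpleGraph.Adj.symm hv) hnadj
      · rw [List.concat_eq_append] at *
        have hc' := List.isChain_append.1 hc
        have hn' := List.nodup_append.1 hn
        refine ⟨u, ⟨r ++ [u], ⟨hc'.1, ?_, by simp, hn'.1⟩, ?_⟩, ?_⟩
        · cases r <;> simpa using hh
        · intro x hx hxn
          exact hn'.2.2 x hx v (by simp) (hp x (List.mem_append_left _ hx) hxn)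
        · exact (hc'.2.2 u (by simp) v (by simp)).symm

end CausalGraph
end

section
/- Let H be a finite undirected simple graph and let A and Y be distinct non-adjacent vertices of H. Then nb_H(Y) is an A–Y cut in H, and for every A–Y cut Z in H one has nb_H(Y) ⊴_H Z, i.e., Y ⊥_H Z\nb_H(Y) | nb_H(Y) and A ⊥_H nb_H(Y)\Z | Z. -/
open Relation Set

namespace CausalGraph

/-- `nb_H(Y)` is an `A`–`Y` cut in `H` and `nb_H(Y) ⊴_H Z` for every
`A`–`Y` cut `Z` in `H`. -/
theorem stmt16 {V : Type*} [Fintype V] [DecidableEq V]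
    (H : SimpleGraph V) (A Y : V)
    (hAY : A ≠ Y) (hnadj : ¬ H.Adj A Y) :
    IsCut Set.univ H A Y (H.neighborSet Y) ∧
    ∀ Z, IsCut Set.univ H A Y Z → TLE H A Y (H.neighborSet Y) Z := by
  have hfirst : ∀ t (p : List V), t ≠ Y → IsPath H.Adj Y t p → ∃ z ∈ H.neighborSet Y, z ∈ p := by
    rintro t p ht ⟨hc, hh, hl, -⟩
    match p, hc, hh, hl with
    | [], _, hh, _ => simp at hh
    | [a], _, hh, hl =>
      simp at hh hl
      exact absurd (hl.symm.trans hh) ht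
    | a :: b :: q, hc, hh, _ =>
      simp at hh
      subst hh
      have h1 : H.Adj a b := (List.isChain_cons_cons.mp hc).1
      exact ⟨b, h1, by simp⟩
  refine ⟨⟨Set.subset_univ _, ?_, ?_⟩, ?_⟩
  · ext x
    simp only [Set.mem_inter_iff, SimpleGraph.mem_neighborSet, Set.mem_insert_iff,
      Set.mem_singleton_iff, Set.mem_empty_iff_false, iff_false, not_and, not_or]
    intro hx
    refine ⟨?_, ?_⟩
    · rintro rfl
      exact hnadj hx.symm
    · rintro rfl
      exact H.loopless.irrefl _ hx
  · rintro p ⟨hc, hh, hl, hn⟩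
    obtain ⟨z, hz, hzp⟩ := hfirst A p.reverse hAY ⟨by
      have hc' : List.IsChain H.Adj p := hc
      refine List.isChain_reverse.mpr (hc'.imp fun a b h => h.symm), by simpa using hl,
      by simpa using hh, by simpa using hn⟩
    exact ⟨z, hz, by simpa using hzp⟩
  · rintro Z ⟨-, hZ, hcut⟩
    have hYZ : Y ∉ Z := fun h => by
      have : Y ∈ Z ∩ {A, Y} := ⟨h, by simp⟩
      rw [hZ] at this
      exact this
    refine ⟨?_, ?_⟩
    · rintro s rfl t ⟨htZ, -⟩ p hp
      exact hfirst t p (fun h => hYZ (h ▸ htZ)) hp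
    · rintro s rfl t ⟨htY, -⟩ p ⟨hc, hh, hl, hn⟩
      have hc' : List.IsChain H.Adj p := hc
      by_cases hYp : Y ∈ p
      · obtain ⟨u, v, rfl⟩ := List.append_of_mem hYp
        have e : u ++ Y :: v = (u ++ [Y]) ++ v := by simp
        rw [e] at hc' hn
        obtain ⟨z, hz, hzp⟩ := hcut (u ++ [Y]) ⟨hc'.left_of_append, by
          cases u <;> simpa using hh, by simp, (List.nodup_append.mp hn).1⟩
        exact ⟨z, hz, by rw [e]; exact List.mem_append_left _ hzp⟩
      · obtain ⟨z, hz, hzp⟩ := hcut (p ++ [Y]) ⟨by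
          refine List.isChain_append.mpr ⟨hc', by simp, ?_⟩
          intro x hx y hy
          simp at hy
          rw [hl] at hx
          simp at hx
          subst hx hy
          exact SimpleGraph.Adj.symm htY, by
          cases p <;> simp at hh ⊢; exact hh, by simp, by
          exact List.nodup_append.mpr ⟨hn, by simp, by
            intro a ha b hb hab
            simp at hb
            subst hb hab
            exact hYp ha⟩⟩
        rcases List.mem_append.mp hzp with h | h
        · exact ⟨z, hz, h⟩
        · simp at h
          exact absurd (h ▸ hz) hYZ

end CausalGraph
end

section
/- Let 𝔅 ⊆ 𝔊 ⊆ ℱ be sub-σ-algebras, suppose each π_a is 𝔅-measurable, and suppose there is ε > 0 with f_a^𝔊 ≥ ε almost surely for every a ∈ 𝒜. Suppose further that f_a^𝔊 = f_a^𝔅 almost surely for every a ∈ 𝒜 (this holds in particular when A is conditionally independent of 𝔊 given 𝔅). For a ∈ 𝒜 set S_a := (1_{A=a}/f_a^𝔊 − 1) · π_a · (b_a^𝔊 − b_a^𝔅). Then Var(ψ^𝔅) − Var(ψ^𝔊) = Var(Σ_{a∈𝒜} S_a) ≥ 0. -/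
open MeasureTheory ProbabilityTheory

namespace CausalVar

variable {Ω : Type*} {α : Type*} [DecidableEq α]

/-- `f_a^m`: the conditional probability of the event `A = a` given the
sub-σ-algebra `m`, i.e. `E[1_{A=a} | m]`. -/
noncomputable def fA [mΩ : MeasurableSpace Ω] (P : Measure Ω) (m : MeasurableSpace Ω)
    (A : Ω → α) (a : α) : Ω → ℝ :=
  P[fun ω => if A ω = a then (1 : ℝ) else 0 | m]

/-- `b_a^m = E[1_{A=a} Y | m] / f_a^m`, a version of `E[Y | A = a, m]`. -/
noncomputable def bA [mΩ : MeasurableSpace Ω] (P : Measure Ω) (m : MeasurableSpace Ω)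
    (A : Ω → α) (Y : Ω → ℝ) (a : α) : Ω → ℝ :=
  fun ω => (P[fun ω' => if A ω' = a then Y ω' else 0 | m]) ω
      / fA (mΩ := mΩ) P m A a ω

/-- The influence function `ψ^m` of the adjusted functional. -/
noncomputable def ψ [mΩ : MeasurableSpace Ω] (P : Measure Ω) (m : MeasurableSpace Ω)
    [Fintype α] (A : Ω → α) (Y : Ω → ℝ) (π : α → Ω → ℝ) : Ω → ℝ :=
  fun ω => ∑ a : α,
    ((if A ω = a then (1 : ℝ) else 0) * π a ω / fA (mΩ := mΩ) P m A a ω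
        * (Y ω - bA (mΩ := mΩ) P m A Y a ω)
      + π a ω * bA (mΩ := mΩ) P m A Y a ω
      - ∫ ω', π a ω' * bA (mΩ := mΩ) P m A Y a ω' ∂P)

theorem aux_int {Ω : Type*} {m mΩ : MeasurableSpace Ω} (hm : m ≤ mΩ) (P : Measure Ω)
    [IsProbabilityMeasure P] (H Z : Ω → ℝ) (hH : StronglyMeasurable[m] H) (hHb : MemLp H ⊤ P)
    (hZ : MemLp Z ⊤ P) : ∫ ω, H ω * Z ω ∂P = ∫ ω, H ω * (P[Z|m]) ω ∂P := by
  have hHZ : Integrable (H * Z) P := (hZ.mul hHb (r := ⊤)).integrable le_top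
  have h1 := condExp_mul_of_stronglyMeasurable_left (μ := P) hH hHZ (hZ.integrable le_top)
  calc ∫ ω, H ω * Z ω ∂P = ∫ ω, (P[H * Z|m]) ω ∂P := (integral_condExp hm).symm
    _ = _ := integral_congr_ae h1

theorem aux_mul {Ω : Type*} {mΩ : MeasurableSpace Ω} {P : Measure Ω} {f g : Ω → ℝ}
    (hf : MemLp f ⊤ P) (hg : MemLp g ⊤ P) : MemLp (fun ω => f ω * g ω) ⊤ P :=
  hg.mul hf (r := ⊤)

theorem aux_b {Ω α : Type*} [DecidableEq α] {m mΩ : MeasurableSpace Ω} (hm : m ≤ mΩ)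
    (P : Measure Ω) [IsProbabilityMeasure P] (A : Ω → α) (Y : Ω → ℝ) (C : ℝ)
    (hYb : ∀ ω, |Y ω| ≤ C) (ε : ℝ) (hε : 0 < ε) (a : α)
    (hf : ∀ᵐ ω ∂P, ε ≤ fA P m A a ω) :
    StronglyMeasurable[m] (fun ω => (fA P m A a ω)⁻¹) ∧
    MemLp (fun ω => (fA P m A a ω)⁻¹) ⊤ P ∧
    StronglyMeasurable[m] (bA P m A Y a) ∧ MemLp (bA P m A Y a) ⊤ P := by
  have s1 : StronglyMeasurable[m] (fun ω => (fA P m A a ω)⁻¹) :=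
    (stronglyMeasurable_condExp.measurable.inv).stronglyMeasurable
  have m1 : MemLp (fun ω => (fA P m A a ω)⁻¹) ⊤ P := by
    refine memLp_top_of_bound (s1.mono hm).aestronglyMeasurable ε⁻¹ ?_
    filter_upwards [hf] with ω h
    rw [Real.norm_eq_abs, abs_of_nonneg (inv_nonneg.2 (hε.le.trans h))]
    exact inv_anti₀ hε h
  have s2 : StronglyMeasurable[m] (P[fun ω' => if A ω' = a then Y ω' else 0 | m]) :=
    stronglyMeasurable_condExp
  have m2 : MemLp (P[fun ω' => if A ω' = a then Y ω' else 0 | m]) ⊤ P := by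
    refine memLp_top_of_bound (s2.mono hm).aestronglyMeasurable C.toNNReal ?_
    refine ae_bdd_condExp_of_ae_bdd (Filter.Eventually.of_forall fun ω => ?_)
    have := hYb ω
    split_ifs
    · exact this.trans (Real.le_coe_toNNReal C)
    · simp
  have e : bA P m A Y a = fun ω => (P[fun ω' => if A ω' = a then Y ω' else 0 | m]) ω *
      (fA P m A a ω)⁻¹ := by
    funext ω; simp only [bA, div_eq_mul_inv]
  refine ⟨s1, m1, ?_, ?_⟩
  · rw [e]; exact s2.mul s1
  · rw [e]; exact aux_mul m2 m1

theorem aux_main {Ω : Type*} {α : Type*} [Fintype α] [DecidableEq α]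
    {mB mG mΩ : MeasurableSpace Ω} (P : Measure Ω) [IsProbabilityMeasure P]
    [MeasurableSpace α] [MeasurableSingletonClass α]
    (A : Ω → α) (hA : Measurable A)
    (Y : Ω → ℝ) (hYm : Measurable Y) (C : ℝ) (hYb : ∀ ω, |Y ω| ≤ C)
    (π : α → Ω → ℝ) (hπ01 : ∀ a ω, π a ω ∈ Set.Icc (0 : ℝ) 1)
    (hBG : mB ≤ mG) (hGΩ : mG ≤ mΩ)
    (hπB : ∀ a, Measurable[mB] (π a))
    (ε : ℝ) (hε : 0 < ε)
    (hfG : ∀ a, ∀ᵐ ω ∂P, ε ≤ fA P mG A a ω)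
    (hff : ∀ a, fA P mG A a =ᵐ[P] fA P mB A a) :
    variance (ψ P mB A Y π) P - variance (ψ P mG A Y π) P
        = variance (fun ω => ∑ a : α,
            ((if A ω = a then (1 : ℝ) else 0) / fA P mG A a ω - 1)
              * π a ω * (bA P mG A Y a ω - bA P mB A Y a ω)) P := by
  have hfB : ∀ a, ∀ᵐ ω ∂P, ε ≤ fA P mB A a ω := fun a => by
    filter_upwards [hfG a, hff a] with ω h1 h2
    rwa [← h2]
  have hG := fun a => aux_b hGΩ P A Y C hYb ε hε a (hfG a)
  have hB := fun a => aux_b (hBG.trans hGΩ) P A Y C hYb ε hε a (hfB a)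
  have hIm : ∀ a, Measurable (fun ω => if A ω = a then (1 : ℝ) else 0) := fun a =>
    Measurable.ite (hA (measurableSet_singleton a)) measurable_const measurable_const
  have hI : ∀ a, MemLp (fun ω => if A ω = a then (1 : ℝ) else 0) ⊤ P := fun a => by
    refine memLp_top_of_bound (hIm a).aestronglyMeasurable 1 (.of_forall fun ω => ?_)
    split_ifs <;> simp
  have hY : MemLp Y ⊤ P := memLp_top_of_bound hYm.aestronglyMeasurable C (.of_forall hYb)
  have hπs : ∀ a, StronglyMeasurable[mG] (π a) := fun a =>
    ((hπB a).mono hBG le_rfl).stronglyMeasurable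
  have hπ : ∀ a, MemLp (π a) ⊤ P := fun a => by
    refine memLp_top_of_bound ((hπs a).mono hGΩ).aestronglyMeasurable 1 (.of_forall fun ω => ?_)
    rw [Real.norm_eq_abs, abs_of_nonneg (hπ01 a ω).1]
    exact (hπ01 a ω).2
  have hIY : ∀ a, MemLp (fun ω => if A ω = a then Y ω else 0) ⊤ P := fun a => by
    have := aux_mul (hI a) hY
    simpa only [ite_mul, one_mul, zero_mul] using this
  -- orthogonality
  have hT : ∀ a (H : Ω → ℝ), StronglyMeasurable[mG] H → MemLp H ⊤ P →
      ∫ ω, H ω * ((if A ω = a then (1 : ℝ) else 0) * (Y ω - bA P mG A Y a ω)) ∂P = 0 := by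
    intro a H hH hHb
    obtain ⟨-, -, sb, mb⟩ := hG a
    have e1 := aux_int hGΩ P H _ hH hHb (hIY a)
    have e2 := aux_int hGΩ P (fun ω => H ω * bA P mG A Y a ω) _ (hH.mul sb)
      (aux_mul hHb mb) (hI a)
    have e3 : ∫ ω, H ω * (P[fun ω' => if A ω' = a then Y ω' else 0 | mG]) ω ∂P =
        ∫ ω, (H ω * bA P mG A Y a ω) *
          (P[fun ω => if A ω = a then (1 : ℝ) else 0 | mG]) ω ∂P := by
      refine integral_congr_ae ?_
      filter_upwards [hfG a] with ω h
      have h0 : fA P mG A a ω ≠ 0 := (hε.trans_le h).ne'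
      change _ = _ * fA P mG A a ω
      simp only [bA]
      field_simp
    have e4 : ∫ ω, H ω * ((if A ω = a then (1 : ℝ) else 0) * (Y ω - bA P mG A Y a ω)) ∂P
        = ∫ ω, H ω * (if A ω = a then Y ω else 0) ∂P -
          ∫ ω, (H ω * bA P mG A Y a ω) * (if A ω = a then (1 : ℝ) else 0) ∂P := by
      rw [← integral_sub ((aux_mul hHb (hIY a)).integrable le_top)
        ((aux_mul (aux_mul hHb mb) (hI a)).integrable le_top)]
      congr 1; funext ω
      split_ifs <;> ring
    rw [e4, e1, e2, e3, sub_self]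
  have hR : ∀ a (H : Ω → ℝ), StronglyMeasurable[mG] H → MemLp H ⊤ P →
      ∫ ω, H ω * ((if A ω = a then (1 : ℝ) else 0) * (fA P mG A a ω)⁻¹ - 1) ∂P = 0 := by
    intro a H hH hHb
    obtain ⟨sf, mf, -, -⟩ := hG a
    have e2 := aux_int hGΩ P (fun ω => H ω * (fA P mG A a ω)⁻¹) _ (hH.mul sf)
      (aux_mul hHb mf) (hI a)
    have e3 : ∫ ω, (H ω * (fA P mG A a ω)⁻¹) *
          (P[fun ω => if A ω = a then (1 : ℝ) else 0 | mG]) ω ∂P = ∫ ω, H ω ∂P := by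
      refine integral_congr_ae ?_
      filter_upwards [hfG a] with ω h
      have h0 : fA P mG A a ω ≠ 0 := (hε.trans_le h).ne'
      change _ * fA P mG A a ω = _
      field_simp
    have e4 : ∫ ω, H ω * ((if A ω = a then (1 : ℝ) else 0) * (fA P mG A a ω)⁻¹ - 1) ∂P
        = ∫ ω, (H ω * (fA P mG A a ω)⁻¹) * (if A ω = a then (1 : ℝ) else 0) ∂P -
          ∫ ω, H ω ∂P := by
      rw [← integral_sub ((aux_mul (aux_mul hHb mf) (hI a)).integrable le_top)
        (hHb.integrable le_top)]
      congr 1; funext ω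
      ring
    rw [e4, e2, e3, sub_self]
  set T : α → Ω → ℝ := fun a ω => (if A ω = a then (1 : ℝ) else 0) * (Y ω - bA P mG A Y a ω)
    with hTdef
  set R : α → Ω → ℝ := fun a ω => (if A ω = a then (1 : ℝ) else 0) * (fA P mG A a ω)⁻¹ - 1
    with hRdef
  set D : α → Ω → ℝ := fun a ω => π a ω * (bA P mG A Y a ω - bA P mB A Y a ω) with hDdef
  set U : α → Ω → ℝ := fun a ω => π a ω * (fA P mG A a ω)⁻¹ with hUdef
  set V : α → Ω → ℝ := fun a ω => π a ω * bA P mG A Y a ω -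
    ∫ ω', π a ω' * bA P mG A Y a ω' ∂P with hVdef
  have mT : ∀ a, MemLp (T a) ⊤ P := fun a => aux_mul (hI a) (hY.sub (hG a).2.2.2)
  have mR : ∀ a, MemLp (R a) ⊤ P := fun a => (aux_mul (hI a) (hG a).2.1).sub (memLp_const 1)
  have mD : ∀ a, MemLp (D a) ⊤ P := fun a => aux_mul (hπ a) ((hG a).2.2.2.sub (hB a).2.2.2)
  have mU : ∀ a, MemLp (U a) ⊤ P := fun a => aux_mul (hπ a) (hG a).2.1
  have mV : ∀ a, MemLp (V a) ⊤ P := fun a => (aux_mul (hπ a) (hG a).2.2.2).sub (memLp_const _)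
  have sD : ∀ a, StronglyMeasurable[mG] (D a) := fun a =>
    (hπs a).mul ((hG a).2.2.1.sub ((hB a).2.2.1.mono hBG))
  have sU : ∀ a, StronglyMeasurable[mG] (U a) := fun a => (hπs a).mul (hG a).1
  have sV : ∀ a, StronglyMeasurable[mG] (V a) := fun a =>
    ((hπs a).mul (hG a).2.2.1).sub stronglyMeasurable_const
  set S : Ω → ℝ := fun ω => ∑ a, D a ω * R a ω with hSdef
  have hS : (fun ω => ∑ a : α,
            ((if A ω = a then (1 : ℝ) else 0) / fA P mG A a ω - 1)
              * π a ω * (bA P mG A Y a ω - bA P mB A Y a ω)) = S := by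
    funext ω
    refine Finset.sum_congr rfl fun a _ => ?_
    simp only [hDdef, hRdef]; ring
  have hX : ψ P mG A Y π = fun ω => ∑ a, (U a ω * T a ω + V a ω) := by
    funext ω
    refine Finset.sum_congr rfl fun a _ => ?_
    simp only [hUdef, hTdef, hVdef]; ring
  set X : Ω → ℝ := fun ω => ∑ a, (U a ω * T a ω + V a ω) with hXdef
  have mS : MemLp S ⊤ P := memLp_finsetSum _ fun a _ => aux_mul (mD a) (mR a)
  have mX : MemLp X ⊤ P := memLp_finsetSum _ fun a _ => (aux_mul (mU a) (mT a)).add (mV a)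
  obtain ⟨k, hk⟩ : ∃ k : ℝ, ψ P mB A Y π =ᵐ[P] fun ω => (X + S) ω + k := by
    refine ⟨∑ a, ((∫ ω', π a ω' * bA P mG A Y a ω' ∂P) - ∫ ω', π a ω' * bA P mB A Y a ω' ∂P), ?_⟩
    filter_upwards [ae_all_iff.2 hff] with ω h
    simp only [ψ, Pi.add_apply, hXdef, hSdef, ← Finset.sum_add_distrib]
    refine Finset.sum_congr rfl fun a _ => ?_
    simp only [hUdef, hTdef, hVdef, hDdef, hRdef, ← h a]
    ring
  have iS : ∫ ω, S ω ∂P = 0 := by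
    rw [hSdef, integral_finsetSum _ fun a _ => (aux_mul (mD a) (mR a)).integrable le_top]
    exact Finset.sum_eq_zero fun a _ => hR a _ (sD a) (mD a)
  have iXS : ∫ ω, X ω * S ω ∂P = 0 := by
    let K : α → α → Ω → ℝ := fun a c ω =>
      U a ω * D c ω * ((if a = c then (1 : ℝ) else 0) * (fA P mG A c ω)⁻¹ - 1)
    have sK : ∀ a c, StronglyMeasurable[mG] (K a c) := fun a c =>
      ((sU a).mul (sD c)).mul ((stronglyMeasurable_const.mul (hG c).1).sub stronglyMeasurable_const)
    have mK : ∀ a c, MemLp (K a c) ⊤ P := fun a c =>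
      aux_mul (aux_mul (mU a) (mD c)) ((aux_mul (memLp_const _) (hG c).2.1).sub (memLp_const 1))
    have e : ∀ ω, X ω * S ω = ∑ a, ∑ c, (K a c ω * T a ω + (V a ω * D c ω) * R c ω) := by
      intro ω
      simp only [hXdef, hSdef, Finset.sum_mul_sum]
      refine Finset.sum_congr rfl fun a _ => Finset.sum_congr rfl fun c _ => ?_
      simp only [K, hTdef, hRdef]
      by_cases h1 : A ω = a
      · subst h1
        simp only [if_true]
        ring
      · simp only [if_neg h1]
        ring
    have i1 : ∀ a c, Integrable (fun ω => K a c ω * T a ω) P := fun a c =>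
      (aux_mul (mK a c) (mT a)).integrable le_top
    have i2 : ∀ a c, Integrable (fun ω => (V a ω * D c ω) * R c ω) P := fun a c =>
      (aux_mul (aux_mul (mV a) (mD c)) (mR c)).integrable le_top
    have i3 : ∀ a c, Integrable (fun ω => K a c ω * T a ω + (V a ω * D c ω) * R c ω) P :=
      fun a c => (i1 a c).add (i2 a c)
    simp only [e]
    rw [integral_finsetSum _ fun a _ => integrable_finsetSum _ fun c _ => i3 a c]
    refine Finset.sum_eq_zero fun a _ => ?_
    rw [integral_finsetSum _ fun c _ => i3 a c]
    refine Finset.sum_eq_zero fun c _ => ?_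
    rw [integral_add (i1 a c) (i2 a c), hT a _ (sK a c) (mK a c), zero_add]
    exact hR c _ ((sV a).mul (sD c)) (aux_mul (mV a) (mD c))
  have mX2 : MemLp X 2 P := mX.mono_exponent le_top
  have mS2 : MemLp S 2 P := mS.mono_exponent le_top
  have hcov : covariance X S P = 0 := by
    rw [covariance_eq_sub mX2 mS2, iS, mul_zero, sub_zero]
    exact iXS
  rw [hS, hX, variance_congr hk, variance_add_const (mX2.add mS2).aestronglyMeasurable,
    variance_add mX2 mS2, hcov]
  ring

/-- Lemma 1 (supplementation with precision variables, statement 17). -/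
theorem stmt17 {Ω : Type*} {α : Type*} [Fintype α] [DecidableEq α] [Nonempty α]
    [mΩ : MeasurableSpace Ω] (P : Measure Ω) [IsProbabilityMeasure P]
    [MeasurableSpace α] [MeasurableSingletonClass α]
    (A : Ω → α) (hA : Measurable A)
    (Y : Ω → ℝ) (hYm : Measurable Y) (C : ℝ) (hYb : ∀ ω, |Y ω| ≤ C)
    (π : α → Ω → ℝ) (hπ01 : ∀ a ω, π a ω ∈ Set.Icc (0 : ℝ) 1)
    (hπsum : ∀ᵐ ω ∂P, ∑ a : α, π a ω = 1)
    (mB mG : MeasurableSpace Ω) (hBG : mB ≤ mG) (hGΩ : mG ≤ mΩ)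
    (hπB : ∀ a, Measurable[mB] (π a))
    (ε : ℝ) (hε : 0 < ε)
    (hfG : ∀ a, ∀ᵐ ω ∂P, ε ≤ fA (mΩ := mΩ) P mG A a ω)
    (hff : ∀ a, fA (mΩ := mΩ) P mG A a =ᵐ[P] fA (mΩ := mΩ) P mB A a) :
    variance (ψ (mΩ := mΩ) P mB A Y π) P - variance (ψ (mΩ := mΩ) P mG A Y π) P
        = variance (fun ω => ∑ a : α,
            ((if A ω = a then (1 : ℝ) else 0) / fA (mΩ := mΩ) P mG A a ω - 1)
              * π a ω
              * (bA (mΩ := mΩ) P mG A Y a ω - bA (mΩ := mΩ) P mB A Y a ω)) P ∧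
    0 ≤ variance (fun ω => ∑ a : α,
            ((if A ω = a then (1 : ℝ) else 0) / fA (mΩ := mΩ) P mG A a ω - 1)
              * π a ω
              * (bA (mΩ := mΩ) P mG A Y a ω - bA (mΩ := mΩ) P mB A Y a ω)) P := by
  exact ⟨aux_main P A hA Y hYm C hYb π hπ01 hBG hGΩ hπB ε hε hfG hff, variance_nonneg _ _⟩

end CausalVar
end
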